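/- For every integer n ≥ 3, the averaged prime gap satisfies ḡ_n < ln n. -/

import Mathlib

open Finset Real

/-- `nthPrime n` is the n-th prime number with 1-based indexing:
`nthPrime 1 = 2`, `nthPrime 2 = 3`, `nthPrime 3 = 5`, ... -/
noncomputable def nthPrime (n : ℕ) : ℕ := Nat.nth Nat.Prime (n - 1)

/-- The arithmetic average of the first `n` primes. -/
noncomputable def avgPrime (n : ℕ) : ℝ := (1 / (n : ℝ)) * ∑ i ∈ Finset.Icc 1 n, (nthPrime i : ℝ)

/-- The gap in the averaged primes. -/
noncomputable def avgGap (n : ℕ) : ℝ := avgPrime (n + 1) - avgPrime n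

/-- The averaged-prime counting function `π̄(x) = #{i ≥ 1 : p̄_i ≤ x}`. -/
noncomputable def avgPrimeCount (x : ℝ) : ℕ := Nat.card {i : ℕ | 1 ≤ i ∧ avgPrime i ≤ x}

/-- The ordinary prime counting function for a real argument. -/
noncomputable def primeCount (x : ℝ) : ℕ := Nat.card {q : ℕ | q.Prime ∧ (q : ℝ) ≤ x}

/-!
Write `p` for the prime following the first `n` primes and `S` for the sum of the latter. The
averaged gap is `(n p - S) / (n (n + 1))`, so the claim is `n p < S + n (n + 1) log n`. Since
`p ∼ n log n` and `S ∼ n² log n / 2`, there is a factor of `3 / 2` to spare asymptotically, and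
Chebyshev's estimates suffice for large `n`. The quotient `(30k)! k! / ((15k)! (10k)! (6k)!)` gives
`ψ(x) ≥ 0.92 x - O(log x)`, which bounds `p` from above, and `θ(x) ≤ 1.15 x + O(1)`. As
`θ` at the `j`-th prime is at least `j log j - O(1)`, the latter bounds each prime, and hence `S`,
from below. The remaining `n < 6572` are checked by running through the primes with exact integer
arithmetic.
-/

open Chebyshev
open scoped Nat ArithmeticFunction.vonMangoldt

/-! ### Chebyshev's estimates -/

theorem mul_log_succ_sub_log_le_one (n : ℕ) : n * (log (n + 1) - log n) ≤ 1 := by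
  rcases n.eq_zero_or_pos with rfl | hn
  · simp
  have hn : (0 : ℝ) < n := by exact_mod_cast hn
  rw [← log_div (by positivity) hn.ne']
  calc n * log ((n + 1) / n) ≤ n * ((n + 1) / n - 1) := by
        gcongr; exact log_le_sub_one_of_pos (by positivity)
    _ = 1 := by field_simp; ring

theorem log_le_div_add_log_sub_one {x c : ℝ} (hx : 0 < x) (hc : 0 < c) :
    log x ≤ x / c + log c - 1 := by
  have h := log_le_sub_one_of_pos (div_pos hx hc)
  rw [log_div hx.ne' hc.ne'] at h
  linarith

theorem log_mul_natCast {a k : ℕ} (ha : a ≠ 0) (hk : k ≠ 0) :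
    log ((a * k : ℕ) : ℝ) = log a + log k := by
  rw [Nat.cast_mul, log_mul (by exact_mod_cast ha) (by exact_mod_cast hk)]

theorem log_natCast_le_log_natCast {a b : ℕ} (h : a ≤ b) : log (a : ℝ) ≤ log b := by
  rcases a.eq_zero_or_pos with rfl | ha
  · simpa using log_natCast_nonneg b
  · exact log_le_log (by exact_mod_cast ha) (by exact_mod_cast h)

theorem le_log_factorial {n : ℕ} (hn : n ≠ 0) :
    n * log n - n + log n / 2 + 1 / 2 ≤ log (n ! : ℝ) := by
  have one_le_log : 1 ≤ log (2 * π) := by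
    rw [le_log_iff_exp_le (by positivity)]
    linarith [exp_one_lt_three, pi_gt_three]
  linarith [Stirling.le_log_factorial_stirling hn]

theorem log_factorial_le {n : ℕ} (hn : n ≠ 0) :
    log (n ! : ℝ) ≤ n * log n - n + log n / 2 + 1 := by
  obtain ⟨m, rfl⟩ := Nat.exists_eq_succ_of_ne_zero hn
  have anti : log (Stirling.stirlingSeq m.succ) ≤ log (Stirling.stirlingSeq 1) :=
    Stirling.log_stirlingSeq'_antitone m.zero_le
  have hm : (m.succ : ℝ) ≠ 0 := by positivity
  rw [Stirling.log_stirlingSeq_formula, Stirling.log_stirlingSeq_formula,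
    log_div hm (exp_ne_zero 1), log_mul two_ne_zero hm] at anti
  simp only [Nat.factorial_one, Nat.cast_one, log_one, mul_one, one_mul, one_div, log_inv,
    log_exp] at anti
  linarith

theorem mul_log_le_log_factorial_add (n : ℕ) : n * log n ≤ log (n ! : ℝ) + n := by
  rcases eq_or_ne n 0 with rfl | hn
  · simp
  · linarith [le_log_factorial hn, log_natCast_nonneg n]

theorem log_factorial_eq_sum_log (n : ℕ) : log (n ! : ℝ) = ∑ i ∈ range n, log (i + 1 : ℕ) := by
  rw [← prod_range_add_one_eq_factorial, Nat.cast_prod,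
    log_prod fun i _ ↦ Nat.cast_ne_zero.mpr i.succ_ne_zero]

theorem log_factorial_eq_sum_vonMangoldt {n N : ℕ} (h : n ≤ N) :
    log (n ! : ℝ) = ∑ d ∈ Ioc 0 N, Λ d * (n / d : ℕ) := by
  have vanish : ∀ d ∈ Ioc 0 N, d ∉ Ioc 0 n → Λ d * ((n / d : ℕ) : ℝ) = 0 := by
    intro d hd hdn
    rw [Nat.div_eq_of_lt (by simp only [mem_Ioc] at hd hdn; omega), Nat.cast_zero, mul_zero]
  rw [← sum_subset (Ioc_subset_Ioc_right h) vanish, ← ArithmeticFunction.sum_Ioc_mul_zeta_eq_sum,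
    ArithmeticFunction.vonMangoldt_mul_zeta, log_factorial_eq_sum_log, range_eq_Ico,
    sum_Ico_add' (fun i : ℕ ↦ log i) 0 n 1, Ico_add_one_add_one_eq_Ioc]
  simp only [ArithmeticFunction.log_apply]

/-- The logarithm of Chebyshev's quotient `(30k)! k! / ((15k)! (10k)! (6k)!)`. -/
noncomputable def chebyshevLog (k : ℕ) : ℝ :=
  log ((30 * k)! : ℝ) + log (k ! : ℝ) - log ((15 * k)! : ℝ) - log ((10 * k)! : ℝ)
    - log ((6 * k)! : ℝ)

/-- The coefficient of `Λ d` in `chebyshevLog k`, as a function of `y = ⌊30k / d⌋`. -/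
def chebyshevCoeff (y : ℕ) : ℤ := y + (y / 30 : ℕ) - (y / 2 : ℕ) - (y / 3 : ℕ) - (y / 5 : ℕ)

theorem chebyshevCoeff_nonneg (y : ℕ) : 0 ≤ chebyshevCoeff y := by
  unfold chebyshevCoeff; omega

theorem chebyshevCoeff_le_one (y : ℕ) : chebyshevCoeff y ≤ 1 := by
  unfold chebyshevCoeff; omega

theorem chebyshevCoeff_eq_one {y : ℕ} (hy : 1 ≤ y) (hy' : y < 6) : chebyshevCoeff y = 1 := by
  unfold chebyshevCoeff; omega

theorem chebyshevLog_eq_sum (k : ℕ) :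
    chebyshevLog k = ∑ d ∈ Ioc 0 (30 * k), Λ d * chebyshevCoeff (30 * k / d) := by
  have div_eq {a b : ℕ} (d : ℕ) (h : 30 * k / b = a) : a / d = 30 * k / d / b := by
    rw [Nat.div_right_comm, h]
  rw [chebyshevLog, log_factorial_eq_sum_vonMangoldt (le_refl (30 * k)),
    log_factorial_eq_sum_vonMangoldt (by omega : k ≤ 30 * k),
    log_factorial_eq_sum_vonMangoldt (by omega : 15 * k ≤ 30 * k),
    log_factorial_eq_sum_vonMangoldt (by omega : 10 * k ≤ 30 * k),
    log_factorial_eq_sum_vonMangoldt (by omega : 6 * k ≤ 30 * k),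
    ← sum_add_distrib, ← sum_sub_distrib, ← sum_sub_distrib, ← sum_sub_distrib]
  refine sum_congr rfl fun d _ ↦ ?_
  rw [div_eq d (by omega : 30 * k / 30 = k), div_eq d (by omega : 30 * k / 2 = 15 * k),
    div_eq d (by omega : 30 * k / 3 = 10 * k), div_eq d (by omega : 30 * k / 5 = 6 * k),
    chebyshevCoeff]
  simp only [Int.cast_sub, Int.cast_add, Int.cast_natCast]
  ring

theorem chebyshevLog_le_psi (k : ℕ) : chebyshevLog k ≤ ψ (30 * k : ℕ) := by
  rw [chebyshevLog_eq_sum, psi, Nat.floor_natCast]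
  refine sum_le_sum fun d _ ↦ mul_le_of_le_one_right ArithmeticFunction.vonMangoldt_nonneg ?_
  exact_mod_cast chebyshevCoeff_le_one _

theorem theta_le_theta_add_chebyshevLog (k : ℕ) :
    θ (30 * k : ℕ) ≤ θ (5 * k : ℕ) + chebyshevLog k := by
  have term_nonneg (d : ℕ) : 0 ≤ Λ d * chebyshevCoeff (30 * k / d) :=
    mul_nonneg ArithmeticFunction.vonMangoldt_nonneg (by exact_mod_cast chebyshevCoeff_nonneg _)
  have log_prime_le : ∀ d ∈ Ioc (5 * k) (30 * k),
      (if d.Prime then log d else 0) ≤ Λ d * chebyshevCoeff (30 * k / d) := by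
    intro d hd
    rw [mem_Ioc] at hd
    split_ifs with hp
    · rw [chebyshevCoeff_eq_one ((Nat.one_le_div_iff hp.pos).mpr hd.2)
        ((Nat.div_lt_iff_lt_mul hp.pos).mpr (by omega)),
        ArithmeticFunction.vonMangoldt_apply_prime hp, Int.cast_one, mul_one]
    · exact term_nonneg d
  rw [theta, theta, Nat.floor_natCast, Nat.floor_natCast, sum_filter, sum_filter,
    ← sum_Ioc_consecutive _ (Nat.zero_le (5 * k)) (by omega : 5 * k ≤ 30 * k),
    chebyshevLog_eq_sum]
  gcongr
  calc ∑ d ∈ Ioc (5 * k) (30 * k), (if d.Prime then log d else 0)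
      ≤ ∑ d ∈ Ioc (5 * k) (30 * k), Λ d * chebyshevCoeff (30 * k / d) := sum_le_sum log_prime_le
    _ ≤ ∑ d ∈ Ioc 0 (30 * k), Λ d * chebyshevCoeff (30 * k / d) :=
      sum_le_sum_of_subset_of_nonneg (Ioc_subset_Ioc_left (Nat.zero_le _))
        fun d _ _ ↦ term_nonneg d

theorem log_six_eq : log 6 = log 2 + log 3 := by norm_num [← log_mul]

theorem log_fifteen_eq : log 15 = log 3 + log 5 := by norm_num [← log_mul]

theorem log_thirty_eq : log 30 = log 2 + log 3 + log 5 := by norm_num [← log_mul]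

theorem le_chebyshevLog (k : ℕ) : 27.6 * k - log k / 2 - 4 ≤ chebyshevLog k := by
  rcases eq_or_ne k 0 with rfl | hk
  · simp [chebyshevLog]
  have main_term : 27.6 * (k : ℝ) ≤ (14 * log 2 + 9 * log 3 + 5 * log 5) * k := by
    gcongr
    linarith [log_two_gt_d9, log_three_gt_d9, log_five_gt_d9]
  have h30 := le_log_factorial (n := 30 * k) (by omega)
  have h1 := le_log_factorial hk
  have h15 := log_factorial_le (n := 15 * k) (by omega)
  have h10 := log_factorial_le (n := 10 * k) (by omega)
  have h6 := log_factorial_le (n := 6 * k) (by omega)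
  rw [log_mul_natCast (by norm_num) hk] at h30 h15 h10 h6
  push_cast [log_thirty_eq, log_fifteen_eq, log_ten_eq, log_six_eq] at h30 h15 h10 h6
  rw [chebyshevLog]
  linarith [log_two_lt_d9, log_three_lt_d9, log_five_lt_d9]

theorem chebyshevLog_le (k : ℕ) : chebyshevLog k ≤ 27.7 * k := by
  rcases eq_or_ne k 0 with rfl | hk
  · simp [chebyshevLog]
  have main_term : (14 * log 2 + 9 * log 3 + 5 * log 5) * k ≤ 27.7 * (k : ℝ) := by
    gcongr
    linarith [log_two_lt_d9, log_three_lt_d9, log_five_lt_d9]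
  have h30 := log_factorial_le (n := 30 * k) (by omega)
  have h1 := log_factorial_le hk
  have h15 := le_log_factorial (n := 15 * k) (by omega)
  have h10 := le_log_factorial (n := 10 * k) (by omega)
  have h6 := le_log_factorial (n := 6 * k) (by omega)
  rw [log_mul_natCast (by norm_num) hk] at h30 h15 h10 h6
  push_cast [log_thirty_eq, log_fifteen_eq, log_ten_eq, log_six_eq] at h30 h15 h10 h6
  rw [chebyshevLog]
  linarith [log_two_gt_d9, log_three_gt_d9, log_five_gt_d9, log_natCast_nonneg k]

theorem theta_natCast_le (N : ℕ) : θ N ≤ 1.15 * N + 230 := by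
  induction N using Nat.strong_induction_on with
  | _ N ih =>
    rcases lt_or_ge N 960 with hN | hN
    · have hN : (N : ℝ) ≤ 960 := by exact_mod_cast hN.le
      calc θ N ≤ log 4 * N := theta_le_log4_mul_x N.cast_nonneg
        _ ≤ 1.387 * N := by gcongr; linarith [log_four_eq, log_two_lt_d9]
        _ ≤ 1.15 * N + 230 := by linarith
    -- Since `27.7 / 25 < 1.15`, passing from `30 k` to `5 k` leaves room to round `N` up to `30 k`.
    · obtain ⟨k, hk, hNk, hkN⟩ : ∃ k, 33 ≤ k ∧ N ≤ 30 * k ∧ 30 * k ≤ N + 30 :=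
        ⟨N / 30 + 1, by omega, by omega, by omega⟩
      have hk : (33 : ℝ) ≤ k := by exact_mod_cast hk
      have hkN : 30 * (k : ℝ) ≤ N + 30 := by exact_mod_cast hkN
      calc θ N ≤ θ (30 * k : ℕ) := theta_mono (by exact_mod_cast hNk)
        _ ≤ θ (5 * k : ℕ) + chebyshevLog k := theta_le_theta_add_chebyshevLog k
        _ ≤ (1.15 * (5 * k : ℕ) + 230) + 27.7 * k :=
          add_le_add (ih (5 * k) (by omega)) (chebyshevLog_le k)
        _ ≤ 1.15 * N + 230 := by push_cast; linarith

/-! ### Bounds for large indices -/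

theorem three_mul_le_nth_prime_add_eight (i : ℕ) : 3 * i ≤ Nat.nth Nat.Prime i + 8 := by
  have count_eq : Nat.primeCounting' (Nat.nth Nat.Prime i) = i := Nat.primeCounting'_nth_eq i
  have count_seven : Nat.primeCounting' 7 = 3 := by decide
  have totient_six : Nat.totient 6 = 2 := by decide
  rcases le_total (Nat.nth Nat.Prime i) 7 with h | h
  · have i_le : i ≤ 3 := count_seven ▸ count_eq ▸ Nat.monotone_primeCounting' h
    have := Nat.add_two_le_nth_prime i
    omega
  · obtain ⟨m, hm⟩ := Nat.exists_eq_add_of_le h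
    have sieve := Nat.primeCounting'_add_le (a := 6) (k := 7) (by norm_num) (by norm_num) m
    rw [← hm, count_eq, count_seven, totient_six] at sieve
    omega

theorem log_succ_le_log_nth_prime (j : ℕ) : log (j + 1 : ℕ) ≤ log (Nat.nth Nat.Prime j) :=
  log_natCast_le_log_natCast ((Nat.le_succ _).trans (Nat.add_two_le_nth_prime j))

theorem log_succ_add_one_le_log_nth_prime {j : ℕ} (hj : 40 ≤ j) :
    log (j + 1 : ℕ) + 1 ≤ log (Nat.nth Nat.Prime j) := by
  have hj : (40 : ℝ) ≤ j := by exact_mod_cast hj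
  have lower : 3 * (j : ℝ) ≤ Nat.nth Nat.Prime j + 8 := by
    exact_mod_cast three_mul_le_nth_prime_add_eight j
  rw [← log_exp 1, ← log_mul (by positivity) (exp_ne_zero 1)]
  refine log_le_log (by positivity) ?_
  calc ((j + 1 : ℕ) : ℝ) * exp 1 ≤ (j + 1 : ℕ) * 2.72 := by gcongr; linarith [exp_one_lt_d9]
    _ ≤ Nat.nth Nat.Prime j := by push_cast; linarith

theorem le_sum_log_nth_prime (n : ℕ) :
    n * log n - 40 ≤ ∑ j ∈ range n, log (Nat.nth Nat.Prime j) := by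
  have term_le (j : ℕ) :
      log (j + 1 : ℕ) + 1 ≤ log (Nat.nth Nat.Prime j) + if j < 40 then 1 else 0 := by
    split_ifs with hj
    · exact add_le_add_left (log_succ_le_log_nth_prime j) 1
    · simpa using log_succ_add_one_le_log_nth_prime (not_lt.mp hj)
  have exceptions_le : ∑ j ∈ range n, (if j < 40 then (1 : ℝ) else 0) ≤ 40 := by
    rw [sum_boole]
    have : #{j ∈ range n | j < 40} ≤ #(range 40) := card_le_card fun j ↦ by simp
    exact_mod_cast this
  have sum_le := sum_le_sum fun j (_ : j ∈ range n) ↦ term_le j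
  rw [sum_add_distrib, sum_add_distrib, ← log_factorial_eq_sum_log, sum_const, card_range,
    nsmul_one] at sum_le
  linarith [mul_log_le_log_factorial_add n]

theorem sum_log_nth_prime_le_theta (i : ℕ) :
    ∑ j ∈ range (i + 1), log (Nat.nth Nat.Prime j) ≤ θ (Nat.nth Nat.Prime i) := by
  have nth_strictMono := Nat.nth_strictMono Nat.infinite_setOfPred_prime
  rw [theta_eq_sum_primesLE_log,
    ← sum_image (g := Nat.nth Nat.Prime) (f := fun p : ℕ ↦ log p) nth_strictMono.injective.injOn]
  refine sum_le_sum_of_subset_of_nonneg (image_subset_iff.mpr fun j hj ↦ ?_)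
    fun p _ _ ↦ log_natCast_nonneg p
  exact Nat.mem_primesLE.mpr
    ⟨nth_strictMono.monotone (mem_range_succ_iff.mp hj), Nat.prime_nth_prime j⟩

theorem le_mul_nth_prime (i : ℕ) :
    (i + 1 : ℕ) * log (i + 1 : ℕ) - 270 ≤ 1.15 * Nat.nth Nat.Prime i := by
  linarith [le_sum_log_nth_prime (i + 1), sum_log_nth_prime_le_theta i,
    theta_natCast_le (Nat.nth Nat.Prime i)]

theorem le_sum_mul_log (n : ℕ) :
    n ^ 2 / 2 * log n - n ^ 2 / 4 ≤ ∑ i ∈ range n, (i + 1 : ℕ) * log (i + 1 : ℕ) := by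
  induction n with
  | zero => simp
  | succ n ih =>
    have log_increment : n * (n * (log (n + 1) - log n)) ≤ n * 1 := by
      gcongr
      exact mul_log_succ_sub_log_le_one n
    have log_nonneg : 0 ≤ log ((n + 1 : ℕ) : ℝ) := log_natCast_nonneg _
    rw [sum_range_succ]
    push_cast at log_nonneg ih ⊢
    linarith

/-- The sum of the first `n` primes. -/
noncomputable def primeSum (n : ℕ) : ℕ := ∑ i ∈ range n, Nat.nth Nat.Prime i

theorem primeSum_succ (n : ℕ) : primeSum (n + 1) = primeSum n + Nat.nth Nat.Prime n :=
  sum_range_succ _ n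

theorem le_mul_primeSum (n : ℕ) :
    n ^ 2 / 2 * log n - n ^ 2 / 4 - 270 * n ≤ 1.15 * primeSum n := by
  have sum_le := sum_le_sum fun i (_ : i ∈ range n) ↦ le_mul_nth_prime i
  rw [sum_sub_distrib, ← mul_sum, sum_const, card_range, nsmul_eq_mul, ← Nat.cast_sum] at sum_le
  rw [primeSum]
  linarith [le_sum_mul_log n]

theorem primeCounting_le_of_lt_nth_prime {m n : ℕ} (h : m < Nat.nth Nat.Prime n) :
    Nat.primeCounting m ≤ n := by
  rw [Nat.primeCounting_eq_primeCounting'_succ]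
  exact (Nat.monotone_primeCounting' h).trans_eq (Nat.primeCounting'_nth_eq n)

theorem mul_nth_prime_le (n : ℕ) :
    0.92 * (Nat.nth Nat.Prime n - 29 : ℝ) ≤ (n + 1 / 2) * log (Nat.nth Nat.Prime n) + 4 := by
  set p := Nat.nth Nat.Prime n
  have p_prime : p.Prime := Nat.prime_nth_prime n
  obtain ⟨k, lt_p, p_le⟩ : ∃ k, 30 * k < p ∧ p ≤ 30 * k + 29 := by
    have not_dvd : ¬ 30 ∣ p := fun ⟨c, hc⟩ ↦
      Nat.not_prime_mul (a := 2) (b := 15 * c) (by norm_num) (by omega)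
        (by rwa [show 2 * (15 * c) = p by omega])
    exact ⟨p / 30, by omega, by omega⟩
  have p_le : (p : ℝ) ≤ 30 * k + 29 := by exact_mod_cast p_le
  have psi_le : ψ (30 * k : ℕ) ≤ n * log p := by
    refine (psi_le_primeCounting_mul_log (30 * k)).trans ?_
    exact mul_le_mul (by exact_mod_cast primeCounting_le_of_lt_nth_prime lt_p)
      (log_natCast_le_log_natCast lt_p.le) (log_natCast_nonneg _) n.cast_nonneg
  have log_k_le : log k ≤ log p := log_natCast_le_log_natCast (by omega)
  linarith [le_chebyshevLog k, chebyshevLog_le_psi k]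

theorem lt_log_natCast {n : ℕ} (hn : 6561 ≤ n) : 8.78 < log n :=
  calc (8.78 : ℝ) < 8 * log 3 := by linarith [log_three_gt_d9]
    _ = log ((3 ^ 8 : ℕ) : ℝ) := by rw [Nat.cast_pow, log_pow]; norm_num
    _ ≤ log n := log_natCast_le_log_natCast hn

theorem mul_nth_prime_le_mul_log {n : ℕ} (hn : 6561 ≤ n) :
    0.836 * Nat.nth Nat.Prime n ≤ (n + 1) * (log n + 1.5) := by
  have n_ge : (6561 : ℝ) ≤ n := by exact_mod_cast hn
  have p_pos : 0 < (Nat.nth Nat.Prime n : ℝ) := by exact_mod_cast (Nat.prime_nth_prime n).pos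
  have log_twelve : log 12 ≤ 2.485 := by
    have : log 12 = log 2 + log 2 + log 3 := by norm_num [← log_mul]
    linarith [log_two_lt_d9, log_three_lt_d9]
  -- The tangent at `12 n` is nearly sharp where the estimate is tight, at `n` just above `6561`.
  have log_p_le := log_le_div_add_log_sub_one p_pos (by positivity : (0 : ℝ) < 12 * n)
  rw [log_mul (by norm_num) (by positivity)] at log_p_le
  have linear_part : (n + 1 / 2) * (Nat.nth Nat.Prime n / (12 * n) : ℝ)
      ≤ 0.0834 * Nat.nth Nat.Prime n := by
    rw [mul_div_assoc', div_le_iff₀ (by positivity)]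
    nlinarith
  have upper := calc
    0.92 * (Nat.nth Nat.Prime n - 29 : ℝ)
      ≤ (n + 1 / 2) * log (Nat.nth Nat.Prime n) + 4 := mul_nth_prime_le n
    _ ≤ (n + 1 / 2) * (Nat.nth Nat.Prime n / (12 * n) + (log n + 1.485)) + 4 := by
      gcongr
      linarith
  nlinarith [lt_log_natCast hn]

theorem mul_nth_prime_lt_of_le {n : ℕ} (hn : 6561 ≤ n) :
    (n * Nat.nth Nat.Prime n : ℝ) < primeSum n + n * (n + 1) * log n := by
  have n_ge : (6561 : ℝ) ≤ n := by exact_mod_cast hn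
  have log_ge := lt_log_natCast hn
  have slack : (n + 1) * (log n + 1.5)
      < 0.836 / 1.15 * (n * (1.65 * log n - 0.25) - 270) := by
    nlinarith
  have p_lt : 1.15 * Nat.nth Nat.Prime n < n * (1.65 * log n - 0.25) - 270 := by
    linarith [mul_nth_prime_le_mul_log hn]
  nlinarith [le_mul_primeSum n]

/-! ### Small indices by computation -/

theorem coprime_factorial_iff_prime {k m : ℕ} (hm : 1 < m) (hkm : k < m) (hmk : m < (k + 1) ^ 2) :
    m.Coprime k ! ↔ m.Prime := by
  rw [Nat.coprime_factorial_iff hm.ne']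
  refine ⟨fun h ↦ ?_, fun hp ↦ by rwa [hp.minFac_eq]⟩
  by_contra hp
  have := Nat.minFac_sq_le_self (by omega) hp
  nlinarith

/-- `forceNat n f` is `f n`. Recursing on `n` makes the kernel evaluate `n` to a literal before
passing it to `f`, so that the accumulators of a long computation do not pile up unevaluated. -/
def forceNat {α : Type*} (n : ℕ) (f : ℕ → α) : α := n.rec (f 0) fun k _ ↦ f (k + 1)

theorem forceNat_eq {α : Type*} (n : ℕ) (f : ℕ → α) : forceNat n f = f n := by
  cases n <;> rfl

/-- A stage in the enumeration of the primes: `count` primes lie below `pos`, and they add up to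
`sum`. -/
structure PrimeScan where
  pos : ℕ
  count : ℕ
  sum : ℕ
deriving DecidableEq

namespace PrimeScan

/-- An integer form of `n * p < S + n * (n + 1) * log n`, using `log 2 > 0.693` and
`log n ≥ ⌊log₂ n ^ 2⌋ / 2 * log 2`. -/
def GapBound (n p S : ℕ) : Prop :=
  2000 * (n * p) < 2000 * S + 693 * (n * (n + 1) * Nat.log2 (n ^ 2))

instance (n p S : ℕ) : Decidable (GapBound n p S) := inferInstanceAs (Decidable (_ < _))

/-- Move past the integer `pos`, counting it as a prime if it is coprime to `P`. The result is
`none` if `pos` violates `GapBound` as the prime following the first `count ≥ 3` primes. -/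
def step (P : ℕ) : PrimeScan → Option PrimeScan
  | ⟨m, c, S⟩ =>
    if m.Coprime P then
      if 3 ≤ c → GapBound c m S then
        forceNat (m + 1) fun m' ↦ forceNat (c + 1) fun c' ↦ forceNat (S + m) fun S' ↦
          some ⟨m', c', S'⟩
      else none
    else forceNat (m + 1) fun m' ↦ some ⟨m', c, S⟩

/-- Perform `2 ^ j` steps. Doubling keeps the depth of the recursion logarithmic. -/
def run (P : ℕ) : ℕ → PrimeScan → Option PrimeScan
  | 0, s => s.step P
  | j + 1, s => (run P j s).bind (run P j)

/-- The fields of `s` are what they are meant to be, and the averaged gap bound, in the form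
`n * p < S + n * (n + 1) * log n`, holds up to `s.count`. -/
structure Valid (s : PrimeScan) : Prop where
  count_eq : s.count = Nat.count Nat.Prime s.pos
  sum_eq : s.sum = primeSum s.count
  gap_lt : ∀ n, 3 ≤ n → n < s.count →
    (n * Nat.nth Nat.Prime n : ℝ) < primeSum n + n * (n + 1) * log n

theorem GapBound.lt_add_mul_log {n p S : ℕ} (h : GapBound n p S) :
    (n * p : ℝ) < S + n * (n + 1) * log n := by
  rcases eq_or_ne n 0 with rfl | hn
  · simpa [GapBound] using h
  have log_ge : Nat.log2 (n ^ 2) * 0.693 ≤ 2 * log n := calc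
    Nat.log2 (n ^ 2) * (0.693 : ℝ) ≤ Nat.log2 (n ^ 2) * log 2 := by
      gcongr; linarith [log_two_gt_d9]
    _ = log ((2 ^ Nat.log2 (n ^ 2) : ℕ) : ℝ) := by rw [Nat.cast_pow, log_pow, Nat.cast_ofNat]
    _ ≤ log ((n ^ 2 : ℕ) : ℝ) := log_natCast_le_log_natCast (Nat.log2_self_le (pow_ne_zero 2 hn))
    _ = 2 * log n := by rw [Nat.cast_pow, log_pow, Nat.cast_ofNat]
  have scaled : (n * (n + 1) : ℝ) * (Nat.log2 (n ^ 2) * 0.693) ≤ n * (n + 1) * (2 * log n) := by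
    gcongr
  have h : (2000 * (n * p) : ℝ) < 2000 * S + 693 * (n * (n + 1) * Nat.log2 (n ^ 2)) := by
    exact_mod_cast h
  linarith

theorem Valid.of_step {k : ℕ} {s t : PrimeScan} (hs : s.Valid) (hpos : 1 < s.pos)
    (hk : k < s.pos) (hsk : s.pos < (k + 1) ^ 2) (h : s.step k ! = some t) :
    t.pos = s.pos + 1 ∧ t.Valid := by
  obtain ⟨m, c, S⟩ := s
  obtain ⟨count_eq, sum_eq, gap_lt⟩ := hs
  dsimp only at *
  simp only [step, forceNat_eq, coprime_factorial_iff_prime hpos hk hsk] at h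
  split_ifs at h with m_prime gap
  · cases h
    have nth_c : Nat.nth Nat.Prime c = m := by rw [count_eq, Nat.nth_count m_prime]
    refine ⟨rfl, ?_, ?_, fun n hn hnc ↦ ?_⟩
    · simp only [Nat.count_succ, if_pos m_prime, count_eq]
    · simp only [primeSum_succ, nth_c, sum_eq]
    · rcases (Nat.lt_succ_iff.mp hnc).eq_or_lt with rfl | hnc
      · rw [nth_c, ← sum_eq]
        exact (gap hn).lt_add_mul_log
      · exact gap_lt n hn hnc
  · cases h
    exact ⟨rfl, by simp only [Nat.count_succ, if_neg m_prime, count_eq, add_zero], sum_eq, gap_lt⟩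

theorem Valid.of_run {k j : ℕ} {s t : PrimeScan} (hs : s.Valid) (hpos : 1 < s.pos)
    (hk : k < s.pos) (hsk : s.pos + 2 ^ j ≤ (k + 1) ^ 2) (h : run k ! j s = some t) :
    t.pos = s.pos + 2 ^ j ∧ t.Valid := by
  induction j generalizing s t with
  | zero => exact hs.of_step hpos hk (by omega) h
  | succ j ih =>
    rw [pow_succ] at hsk ⊢
    obtain ⟨u, hu, ht⟩ := Option.bind_eq_some_iff.mp h
    obtain ⟨u_pos, u_valid⟩ := ih hs hpos hk (by omega) hu
    obtain ⟨t_pos, t_valid⟩ := ih u_valid (by omega) (by omega) (by omega) ht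
    exact ⟨by omega, t_valid⟩

theorem Valid.of_forced_run {k : ℕ} (j : ℕ) {s t : PrimeScan} (hs : s.Valid)
    (h : 1 < s.pos ∧ k < s.pos ∧ s.pos + 2 ^ j ≤ (k + 1) ^ 2 ∧
      forceNat k ! (run · j s) = some t) : t.Valid := by
  obtain ⟨hpos, hk, hsk, h⟩ := h
  rw [forceNat_eq] at h
  exact (hs.of_run hpos hk hsk h).2

theorem valid_4 : Valid ⟨4, 2, 5⟩ where
  count_eq := by decide
  sum_eq := by
    simp only [primeSum, sum_range_succ, sum_range_zero, Nat.nth_prime_zero_eq_two,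
      Nat.nth_prime_one_eq_three]
  gap_lt n hn hn' := by dsimp only at hn'; omega

theorem valid_65804 : Valid ⟨65804, 6572, 204257573⟩ := by
  have valid_12 : Valid ⟨12, 5, 28⟩ := valid_4.of_forced_run (k := 3) 3 (by decide +kernel)
  have valid_140 : Valid ⟨140, 34, 2127⟩ :=
    valid_12.of_forced_run (k := 11) 7 (by decide +kernel)
  have valid_268 : Valid ⟨268, 56, 6601⟩ :=
    valid_140.of_forced_run (k := 139) 7 (by decide +kernel)
  exact valid_268.of_forced_run (k := 267) 16 (by decide +kernel)

end PrimeScan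

theorem mul_nth_prime_lt {n : ℕ} (hn : 3 ≤ n) :
    (n * Nat.nth Nat.Prime n : ℝ) < primeSum n + n * (n + 1) * log n := by
  rcases lt_or_ge n 6572 with hn' | hn'
  · exact PrimeScan.valid_65804.gap_lt n hn hn'
  · exact mul_nth_prime_lt_of_le (by omega)

theorem sum_nthPrime (n : ℕ) : ∑ i ∈ Icc 1 n, (nthPrime i : ℝ) = primeSum n := by
  induction n with
  | zero => simp [primeSum]
  | succ n ih =>
    rw [sum_Icc_succ_top (by omega), ih, primeSum_succ, Nat.cast_add, nthPrime,
      Nat.add_sub_cancel]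

theorem avgGap_eq {n : ℕ} (hn : n ≠ 0) :
    avgGap n = (n * Nat.nth Nat.Prime n - primeSum n) / (n * (n + 1)) := by
  rw [avgGap, avgPrime, avgPrime, sum_nthPrime, sum_nthPrime, primeSum_succ]
  push_cast
  field_simp
  ring

theorem stmt5 (n : ℕ) (hn : 3 ≤ n) :
    avgGap n < Real.log n := by
  have n_pos : (0 : ℝ) < n := by exact_mod_cast (by omega : 0 < n)
  rw [avgGap_eq (by omega), div_lt_iff₀ (mul_pos n_pos (by positivity))]
  linarith [mul_nth_prime_lt hn]
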